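/- Let 𝒜 be a C*-category. Then the supremum of all C*-seminorms on the *-algebra C*₀𝒜 is finite: for every C*-seminorm ρ on C*₀𝒜 and every element a = Σ_{x,y} a_{xy} with a_{xy} ∈ 𝒜(x,y), one has ρ(a) ≤ Σ_{x,y} ρ(a_{xy}) = Σ_{x,y} ρ(a_{xy}* a_{xy})^{1/2} ≤ Σ_{x,y} ‖a_{xy}* a_{xy}‖^{1/2}, using that each C*-algebra 𝒜(x,x) has a unique C*-norm. Hence the enveloping C*-algebra C*𝒜 is well defined. -/

import Mathlib

universe u v

/-- A (possibly nonunital) C*-category: a small category whose morphism sets are complex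
Banach spaces equipped with conjugate-linear involutions `* : 𝒜(x,y) → 𝒜(y,x)` satisfying
`(a*)* = a`, `‖ab‖ ≤ ‖a‖ ‖b‖`, `‖a* a‖ = ‖a‖²`, `(ab)* = b* a*` and `a* a ≥ 0` (the last
axiom expressed by `a* a` being of the form `b* b` for an endomorphism `b`).  Identity
morphisms are not required. -/
structure CStarCategory where
  Obj : Type u
  Hom : Obj → Obj → Type v
  [nacg : ∀ x y, NormedAddCommGroup (Hom x y)]
  [nsp : ∀ x y, NormedSpace ℂ (Hom x y)]
  [complete : ∀ x y, CompleteSpace (Hom x y)]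
  /-- composition: `comp g f = g ∘ f` -/
  comp : ∀ {x y z : Obj}, Hom y z → Hom x y → Hom x z
  /-- the involution -/
  star : ∀ {x y : Obj}, Hom x y → Hom y x
  comp_assoc : ∀ {w x y z : Obj} (h : Hom y z) (g : Hom x y) (f : Hom w x),
    comp (comp h g) f = comp h (comp g f)
  add_comp : ∀ {x y z : Obj} (g g' : Hom y z) (f : Hom x y),
    comp (g + g') f = comp g f + comp g' f
  comp_add : ∀ {x y z : Obj} (g : Hom y z) (f f' : Hom x y),
    comp g (f + f') = comp g f + comp g f'
  smul_comp : ∀ {x y z : Obj} (c : ℂ) (g : Hom y z) (f : Hom x y),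
    comp (c • g) f = c • comp g f
  comp_smul : ∀ {x y z : Obj} (c : ℂ) (g : Hom y z) (f : Hom x y),
    comp g (c • f) = c • comp g f
  star_add : ∀ {x y : Obj} (f g : Hom x y), star (f + g) = star f + star g
  star_smul : ∀ {x y : Obj} (c : ℂ) (f : Hom x y),
    star (c • f) = (starRingEnd ℂ c) • star f
  star_star : ∀ {x y : Obj} (f : Hom x y), star (star f) = f
  star_comp : ∀ {x y z : Obj} (g : Hom y z) (f : Hom x y),
    star (comp g f) = comp (star f) (star g)
  norm_comp_le : ∀ {x y z : Obj} (g : Hom y z) (f : Hom x y), ‖comp g f‖ ≤ ‖g‖ * ‖f‖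
  norm_star_comp_self : ∀ {x y : Obj} (f : Hom x y), ‖comp (star f) f‖ = ‖f‖ ^ 2
  star_comp_self_nonneg : ∀ {x y : Obj} (f : Hom x y),
    ∃ b : Hom x x, comp (star f) f = comp (star b) b

namespace CStarCategory

attribute [instance] CStarCategory.nacg CStarCategory.nsp CStarCategory.complete

variable (𝒜 : CStarCategory)

/-- The underlying vector space of the *-algebra `C*₀𝒜 = ⊕_{x,y} 𝒜(x,y)`, as finitely
supported dependent functions. -/
abbrev C0 : Type _ := Π₀ p : 𝒜.Obj × 𝒜.Obj, 𝒜.Hom p.1 p.2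

open scoped Classical in
/-- The product of the *-algebra `C*₀𝒜`: for `f ∈ 𝒜(x,y)` and `g ∈ 𝒜(z,w)`,
`f · g := f ∘ g` if the morphisms are composable (`w = x`) and `0` otherwise. -/
noncomputable def c0Mul (a b : 𝒜.C0) : 𝒜.C0 :=
  DFinsupp.sum a fun p f => DFinsupp.sum b fun q g =>
    if h : q.2 = p.1 then DFinsupp.single (q.1, p.2) (𝒜.comp f (h ▸ g)) else 0

open scoped Classical in
/-- The involution of the *-algebra `C*₀𝒜`, inherited from `𝒜`. -/
noncomputable def c0Star (a : 𝒜.C0) : 𝒜.C0 :=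
  DFinsupp.sum a fun p f => DFinsupp.single (p.2, p.1) (𝒜.star f)

open scoped Classical in
/-- The inclusion of the morphism set `𝒜(x,y)` into `C*₀𝒜`. -/
noncomputable def ofHom (x y : 𝒜.Obj) (f : 𝒜.Hom x y) : 𝒜.C0 :=
  DFinsupp.single (x, y) f

/-- A C*-seminorm on the *-algebra `C*₀𝒜`: a submultiplicative seminorm `ρ` with
`ρ(a* a) = ρ(a)²`. -/
structure IsCStarSeminorm (ρ : 𝒜.C0 → ℝ) : Prop where
  nonneg : ∀ a, 0 ≤ ρ a
  add_le : ∀ a b, ρ (a + b) ≤ ρ a + ρ b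
  smul_eq : ∀ (c : ℂ) (a), ρ (c • a) = ‖c‖ * ρ a
  mul_le : ∀ a b, ρ (𝒜.c0Mul a b) ≤ ρ a * ρ b
  cstar : ∀ a, ρ (𝒜.c0Mul (𝒜.c0Star a) a) = ρ a ^ 2

end CStarCategory

namespace CSeminormAux

/-- For a self-adjoint contraction `h`, the element `c = 1 - √(1 - h²)`. -/
theorem aux_exists_sqrt {A : Type*} [NonUnitalCStarAlgebra A] (h : A) (hs : IsSelfAdjoint h)
    (hn : ‖h‖ ≤ 1) :
    ∃ c : A, star c = c ∧ h * c = c * h ∧ h * h = c + c - c * c := by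
  let f : ℝ → ℝ := fun t => 1 - Real.sqrt (1 - t * t)
  have hf : Continuous f := by fun_prop
  have hf0 : f 0 = 0 := by simp [f]
  refine ⟨cfcₙ f h, (cfcₙ_predicate f h : IsSelfAdjoint _).star_eq, ?_, ?_⟩
  · have := cfcₙ_commute_cfcₙ (id : ℝ → ℝ) f h
    rw [cfcₙ_id ℝ h] at this
    exact this
  · have e1 : h * h = cfcₙ (fun t : ℝ => t * t) h := by
      rw [cfcₙ_mul (fun t : ℝ => t) (fun t : ℝ => t) h, cfcₙ_id' ℝ h]
    rw [e1, ← cfcₙ_mul f f h hf.continuousOn hf0 hf.continuousOn hf0,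
      ← cfcₙ_add f f h hf.continuousOn hf0 hf.continuousOn hf0,
      ← cfcₙ_sub (fun t => f t + f t) (fun t => f t * f t) h
        (by fun_prop) (by simp [hf0]) (by fun_prop) (by simp [hf0])]
    refine cfcₙ_congr fun t ht => ?_
    have h1 : ‖t‖ ≤ 1 := (NonUnitalIsometricContinuousFunctionalCalculus.norm_quasispectrum_le
      h ht hs).trans hn
    rw [Real.norm_eq_abs, abs_le] at h1
    have h2 : 0 ≤ 1 - t * t := by nlinarith
    have h3 := Real.mul_self_sqrt h2
    simp only [f]
    linarith

/-- `u = h + s (1 - c)` is isometric. -/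
theorem aux_unitary {A : Type*} [NonUnitalCStarAlgebra A] (h c b : A) (s : ℂ)
    (hs : star h = h) (hc : star c = c) (hcomm : h * c = c * h) (hh : h * h = c + c - c * c)
    (s2 : s * s = -1) (s1 : star s = -s) :
    star (h * b + s • (b - c * b)) * (h * b + s • (b - c * b)) = star b * b := by
  have e1 : h * (h * b) = c * b + c * b - c * (c * b) := by
    rw [← mul_assoc, hh, sub_mul, add_mul, mul_assoc]
  have e2 : h * (c * b) = c * (h * b) := by rw [← mul_assoc, hcomm, mul_assoc]
  have e3 : ∀ x : A, s • s • x = -x := fun x => by rw [smul_smul, s2, neg_smul, one_smul]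
  simp only [star_add, star_mul, star_smul, star_sub, hs, hc, s1, mul_add, add_mul, mul_sub,
    sub_mul, smul_mul_assoc, mul_smul_comm, mul_assoc, e1, e2, smul_add, smul_sub, smul_neg,
    neg_smul, neg_mul, mul_neg, e3, neg_neg]
  abel

/-- A C*-seminorm on a C*-algebra is dominated by the norm (self-adjoint contractions). -/
theorem aux_sa_le_one {A : Type*} [NonUnitalCStarAlgebra A] (ρ : A → ℝ)
    (h0 : ∀ a, 0 ≤ ρ a) (hadd : ∀ a b, ρ (a + b) ≤ ρ a + ρ b)
    (hsmul : ∀ (c : ℂ) a, ρ (c • a) = ‖c‖ * ρ a)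
    (hstar : ∀ a, ρ (star a * a) = ρ a ^ 2) (h : A) (hs : IsSelfAdjoint h) (hn : ‖h‖ ≤ 1) :
    ρ h ≤ 1 := by
  obtain ⟨c, hc, hcomm, hh⟩ := aux_exists_sqrt h hs hn
  have key : ∀ s : ℂ, s * s = -1 → star s = -s → ρ (h * h + s • (h - c * h)) = ρ h := by
    intro s s2 s1
    have := hstar (h * h + s • (h - c * h))
    rw [aux_unitary h c h s hs.star_eq hc hcomm hh s2 s1, hstar] at this
    exact ((sq_eq_sq₀ (h0 _) (h0 _)).1 this).symm
  have k1 := key Complex.I (by simp) (by simp)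
  have k2 := key (-Complex.I) (by simp) (by simp)
  have e : (2 : ℂ) • (h * h) = (h * h + Complex.I • (h - c * h))
      + (h * h + (-Complex.I) • (h - c * h)) := by
    rw [neg_smul, two_smul]; abel
  have l := hadd (h * h + Complex.I • (h - c * h)) (h * h + (-Complex.I) • (h - c * h))
  rw [← e, hsmul, k1, k2] at l
  have q := hstar h
  rw [hs.star_eq] at q
  rw [q] at l
  norm_num at l
  have := h0 h
  nlinarith

theorem aux_sa_le {A : Type*} [NonUnitalCStarAlgebra A] (ρ : A → ℝ)
    (h0 : ∀ a, 0 ≤ ρ a) (hadd : ∀ a b, ρ (a + b) ≤ ρ a + ρ b)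
    (hsmul : ∀ (c : ℂ) a, ρ (c • a) = ‖c‖ * ρ a)
    (hstar : ∀ a, ρ (star a * a) = ρ a ^ 2) (h : A) (hs : IsSelfAdjoint h) :
    ρ h ≤ ‖h‖ := by
  rcases eq_or_ne h 0 with rfl | hne
  · have := hsmul 0 0
    simp at this
    simp [this]
  have hp : 0 < ‖h‖ := norm_pos_iff.2 hne
  have := aux_sa_le_one ρ h0 hadd hsmul hstar (((‖h‖⁻¹ : ℝ) : ℂ) • h)
    (by
      rw [IsSelfAdjoint, star_smul, hs.star_eq]
      simp)
    (by
      rw [norm_smul]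
      simp [hp.ne'])
  rw [hsmul] at this
  simp only [Complex.norm_real, norm_inv, norm_norm] at this
  rwa [inv_mul_le_iff₀ hp, mul_one] at this

end CSeminormAux

namespace CStarCategory

/-- The endomorphism C*-algebra. -/
noncomputable abbrev endAlg (𝒜 : CStarCategory) (x : 𝒜.Obj) : NonUnitalCStarAlgebra (𝒜.Hom x x) :=
  { 𝒜.nacg x x, 𝒜.nsp x x, 𝒜.complete x x with
    mul := fun f g => 𝒜.comp f g
    star := fun f => 𝒜.star f
    left_distrib := fun f g h => 𝒜.comp_add f g h
    right_distrib := fun f g h => 𝒜.add_comp f g h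
    zero_mul := fun f => by
      have := 𝒜.smul_comp 0 (0 : 𝒜.Hom x x) f
      rw [zero_smul, zero_smul] at this
      exact this
    mul_zero := fun f => by
      have := 𝒜.comp_smul 0 f (0 : 𝒜.Hom x x)
      rw [zero_smul, zero_smul] at this
      exact this
    mul_assoc := fun f g h => 𝒜.comp_assoc f g h
    norm_mul_le := fun f g => 𝒜.norm_comp_le f g
    star_involutive := fun f => 𝒜.star_star f
    star_mul := fun f g => 𝒜.star_comp f g
    star_add := fun f g => 𝒜.star_add f g
    norm_mul_self_le := fun f => by
      rw [← sq]
      exact (𝒜.norm_star_comp_self f).ge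
    smul_assoc := fun c f g => 𝒜.smul_comp c f g
    smul_comm := fun c f g => (𝒜.comp_smul c f g).symm
    star_smul := fun c f => 𝒜.star_smul c f }

theorem comp_zero' (𝒜 : CStarCategory) {x y z : 𝒜.Obj} (g : 𝒜.Hom y z) :
    𝒜.comp g (0 : 𝒜.Hom x y) = 0 := by
  have := 𝒜.comp_smul 0 g (0 : 𝒜.Hom x y)
  rwa [zero_smul, zero_smul] at this

theorem zero_comp' (𝒜 : CStarCategory) {x y z : 𝒜.Obj} (f : 𝒜.Hom x y) :
    𝒜.comp (0 : 𝒜.Hom y z) f = 0 := by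
  have := 𝒜.smul_comp 0 (0 : 𝒜.Hom y z) f
  rwa [zero_smul, zero_smul] at this

theorem star_zero' (𝒜 : CStarCategory) {x y : 𝒜.Obj} :
    𝒜.star (0 : 𝒜.Hom x y) = 0 := by
  have := 𝒜.star_smul 0 (0 : 𝒜.Hom x y)
  rwa [zero_smul, map_zero, zero_smul] at this

theorem c0Star_ofHom (𝒜 : CStarCategory) {x y : 𝒜.Obj} (f : 𝒜.Hom x y) :
    𝒜.c0Star (𝒜.ofHom x y f) = 𝒜.ofHom y x (𝒜.star f) := by
  classical
  unfold c0Star ofHom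
  rw [DFinsupp.sum_single_index]
  simp [star_zero']

theorem c0Mul_ofHom (𝒜 : CStarCategory) {x y z : 𝒜.Obj} (g : 𝒜.Hom y z) (f : 𝒜.Hom x y) :
    𝒜.c0Mul (𝒜.ofHom y z g) (𝒜.ofHom x y f) = 𝒜.ofHom x z (𝒜.comp g f) := by
  classical
  unfold c0Mul ofHom
  rw [DFinsupp.sum_single_index, DFinsupp.sum_single_index]
  · simp
  · simp [comp_zero']
  · rw [DFinsupp.sum_single_index]
    · simp [zero_comp']
    · simp [comp_zero']

theorem rho_ofHom_end_le (𝒜 : CStarCategory) (ρ : 𝒜.C0 → ℝ) (hρ : 𝒜.IsCStarSeminorm ρ)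
    {x : 𝒜.Obj} (h : 𝒜.Hom x x) (hs : 𝒜.star h = h) : ρ (𝒜.ofHom x x h) ≤ ‖h‖ := by
  classical
  letI := 𝒜.endAlg x
  refine CSeminormAux.aux_sa_le (A := 𝒜.Hom x x) (fun f => ρ (𝒜.ofHom x x f)) (fun _ => hρ.nonneg _)
    (fun a b => ?_) (fun c a => ?_) (fun a => ?_) h hs
  · have : 𝒜.ofHom x x (a + b) = 𝒜.ofHom x x a + 𝒜.ofHom x x b := by
      unfold ofHom
      exact DFinsupp.single_add _ _ _
    show ρ (𝒜.ofHom x x (a + b)) ≤ _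
    rw [this]
    exact hρ.add_le _ _
  · have : 𝒜.ofHom x x (c • a) = c • 𝒜.ofHom x x a := by
      unfold ofHom
      exact DFinsupp.single_smul _ _
    show ρ (𝒜.ofHom x x (c • a)) = _
    rw [this]
    exact hρ.smul_eq _ _
  · have := hρ.cstar (𝒜.ofHom x x a)
    rw [c0Star_ofHom, c0Mul_ofHom] at this
    exact this

theorem rho_eq_sqrt (𝒜 : CStarCategory) (ρ : 𝒜.C0 → ℝ) (hρ : 𝒜.IsCStarSeminorm ρ) (a : 𝒜.C0) :
    ρ a = Real.sqrt (ρ (𝒜.c0Mul (𝒜.c0Star a) a)) := by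
  rw [hρ.cstar, Real.sqrt_sq (hρ.nonneg _)]

theorem rho_ofHom_le (𝒜 : CStarCategory) (ρ : 𝒜.C0 → ℝ) (hρ : 𝒜.IsCStarSeminorm ρ)
    {x y : 𝒜.Obj} (f : 𝒜.Hom x y) :
    ρ (𝒜.ofHom x y f) ≤ Real.sqrt ‖𝒜.comp (𝒜.star f) f‖ := by
  rw [rho_eq_sqrt 𝒜 ρ hρ, c0Star_ofHom, c0Mul_ofHom]
  refine Real.sqrt_le_sqrt (rho_ofHom_end_le 𝒜 ρ hρ _ ?_)
  rw [𝒜.star_comp, 𝒜.star_star]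

open scoped Classical in
theorem rho_le_sum (𝒜 : CStarCategory) (ρ : 𝒜.C0 → ℝ) (hρ : 𝒜.IsCStarSeminorm ρ) (a : 𝒜.C0) :
    ρ a ≤ ∑ p ∈ a.support, ρ (𝒜.ofHom p.1 p.2 (a p)) := by
  have h0 : ρ 0 = 0 := by
    have := hρ.smul_eq 0 0
    simpa using this
  have e : a = ∑ p ∈ a.support, 𝒜.ofHom p.1 p.2 (a p) :=
    (DFinsupp.sum_single (f := a)).symm
  calc ρ a = ρ (∑ p ∈ a.support, 𝒜.ofHom p.1 p.2 (a p)) := congrArg ρ e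
    _ ≤ _ := Finset.le_sum_of_subadditive ρ h0.le hρ.add_le _ _

end CStarCategory

open scoped Classical in
/-- Let `𝒜` be a C*-category.  Then the supremum of all C*-seminorms on
the *-algebra `C*₀𝒜` is finite: for every C*-seminorm `ρ` on `C*₀𝒜` and every element
`a = Σ_{x,y} a_{xy}` with `a_{xy} ∈ 𝒜(x,y)`, one has
`ρ(a) ≤ Σ_{x,y} ρ(a_{xy}) = Σ_{x,y} ρ(a_{xy}* a_{xy})^{1/2} ≤ Σ_{x,y} ‖a_{xy}* a_{xy}‖^{1/2}`
(the last inequality because each C*-algebra `𝒜(x,x)` has a unique C*-norm).  Hence the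
enveloping C*-algebra `C*𝒜` is well defined: each set `{ρ(a) | ρ a C*-seminorm}` is
bounded above. -/
theorem CStarCategory.cstarSeminorm_le (𝒜 : CStarCategory) (ρ : 𝒜.C0 → ℝ)
    (hρ : 𝒜.IsCStarSeminorm ρ) (a : 𝒜.C0) :
    (ρ a ≤ ∑ p ∈ a.support, ρ (𝒜.ofHom p.1 p.2 (a p))) ∧
    (∀ p : 𝒜.Obj × 𝒜.Obj, ρ (𝒜.ofHom p.1 p.2 (a p))
      = Real.sqrt (ρ (𝒜.c0Mul (𝒜.c0Star (𝒜.ofHom p.1 p.2 (a p))) (𝒜.ofHom p.1 p.2 (a p))))) ∧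
    (ρ a ≤ ∑ p ∈ a.support, Real.sqrt ‖𝒜.comp (𝒜.star (a p)) (a p)‖) ∧
    BddAbove {r : ℝ | ∃ ρ' : 𝒜.C0 → ℝ, 𝒜.IsCStarSeminorm ρ' ∧ r = ρ' a} := by
  have main : ∀ ρ' : 𝒜.C0 → ℝ, 𝒜.IsCStarSeminorm ρ' →
      ρ' a ≤ ∑ p ∈ a.support, Real.sqrt ‖𝒜.comp (𝒜.star (a p)) (a p)‖ := fun ρ' h' =>
    (rho_le_sum 𝒜 ρ' h' a).trans (Finset.sum_le_sum fun p _ => rho_ofHom_le 𝒜 ρ' h' (a p))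
  refine ⟨rho_le_sum 𝒜 ρ hρ a, fun p => rho_eq_sqrt 𝒜 ρ hρ _, main ρ hρ,
    ⟨∑ p ∈ a.support, Real.sqrt ‖𝒜.comp (𝒜.star (a p)) (a p)‖, ?_⟩⟩
  rintro r ⟨ρ', h', rfl⟩
  exact main ρ' h'
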